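/- An element f ∈ O_U ∩ O_V (a global function on Z_k^{(n)}) is a unit of the ring A if and only if its coefficient of the monomial z⁰u⁰ is nonzero; moreover, in that case its inverse again lies in O_U ∩ O_V. (This is the characterization, via the map det₀ of restriction to the zero section, of invertible global functions on Z_k^{(n)}.) -/

import Mathlib

set_option synthInstance.maxHeartbeats 1000000
set_option maxHeartbeats 1000000

noncomputable section

/-- The ring of Laurent polynomials `ℂ[z,z⁻¹]`. -/
abbrev Lz : Type := LaurentPolynomial ℂ

/-- The ring `P = ℂ[z,z⁻¹][[u]]` of formal power series in `u` with Laurent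
polynomial coefficients. -/
abbrev Pz : Type := PowerSeries Lz

/-- The monomial `z^l u^i` as an element of `P`. -/
def mon (l : ℤ) (i : ℕ) : Pz := PowerSeries.monomial (R := Lz) i (LaurentPolynomial.T l)

/-- The coefficient of `z^l` in a Laurent polynomial, as a `ℂ`-linear map. -/
def coeffL (l : ℤ) : Lz →ₗ[ℂ] ℂ :=
  (Finsupp.lapply l).comp (AddMonoidAlgebra.coeffLinearEquiv ℂ).toLinearMap

/-- The coefficient of `z^l u^i` in an element of `P`, as a `ℂ`-linear map. -/
def coeffP (l : ℤ) (i : ℕ) : Pz →ₗ[ℂ] ℂ :=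
  (coeffL l).comp ((PowerSeries.coeff (R := Lz) i).restrictScalars ℂ)

/-- The ideal `(u^{n+1})` of `P`. -/
def In (n : ℕ) : Ideal Pz := Ideal.span {(PowerSeries.X : Pz) ^ (n + 1)}

/-- The ring `A = ℂ[z,z⁻¹][u]/(u^{n+1})`, the coordinate ring of the overlap of the two
standard charts of the `n`-th infinitesimal neighborhood `Z_k^{(n)}`. -/
abbrev Aq (n : ℕ) : Type := Pz ⧸ In n

/-- The quotient map `P → A`. -/
def toA (n : ℕ) : Pz →+* Aq n := Ideal.Quotient.mk (In n)

/-- The monomial `z^l u^i` as an element of `A`. -/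
def monA (n : ℕ) (l : ℤ) (i : ℕ) : Aq n := toA n (mon l i)

/-- `O_U ⊆ A`: the `ℂ`-span of the monomials `z^l u^i` with `l ≥ 0`, `0 ≤ i ≤ n`. -/
def OU (n : ℕ) : Submodule ℂ (Aq n) :=
  Submodule.span ℂ {x | ∃ l : ℤ, ∃ i : ℕ, 0 ≤ l ∧ i ≤ n ∧ x = monA n l i}

/-- `O_V ⊆ A`: the `ℂ`-span of the monomials `z^l u^i` with `l ≤ k·i`, `0 ≤ i ≤ n`. -/
def OV (k n : ℕ) : Submodule ℂ (Aq n) :=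
  Submodule.span ℂ {x | ∃ l : ℤ, ∃ i : ℕ, l ≤ k * i ∧ i ≤ n ∧ x = monA n l i}

/-- The submodule `a·S` obtained from a submodule `S` by multiplying by a fixed element `a`. -/
def msmul {n : ℕ} (a : Aq n) (S : Submodule ℂ (Aq n)) : Submodule ℂ (Aq n) :=
  Submodule.map (LinearMap.mulLeft ℂ a) S

/-- The coefficient of the monomial `z^0 u^0` in an element of `A` (well defined since the
ideal `(u^{n+1})` has vanishing `u^0`-coefficient). -/
def c00 (n : ℕ) : Aq n →ₗ[ℂ] ℂ := by
  refine (Submodule.liftQ ((In n).restrictScalars ℂ) (coeffP 0 0) ?_).comp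
    (Submodule.Quotient.restrictScalarsEquiv ℂ ((In n) : Submodule Pz Pz)).symm.toLinearMap
  intro x hx
  simp only [Submodule.restrictScalars_mem, In, Ideal.mem_span_singleton] at hx
  obtain ⟨g, rfl⟩ := hx
  simp only [LinearMap.mem_ker, coeffP, coeffL, LinearMap.comp_apply,
    LinearMap.restrictScalars_apply]
  have h : (PowerSeries.coeff (R := Lz) 0) ((PowerSeries.X : Pz) ^ (n + 1) * g) = 0 := by
    rw [PowerSeries.coeff_zero_eq_constantCoeff, map_mul, map_pow,
      PowerSeries.constantCoeff_X, zero_pow (Nat.succ_ne_zero n), zero_mul]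
  rw [h]
  simp

/-!
Restricted to the zero section, a global function `f` is a Laurent polynomial in `z` with only
nonnegative exponents (from the chart `U`) and only nonpositive ones (from the chart `V`), that is,
the constant `c` given by its coefficient of `z^0 u^0`. The kernel of the restriction is generated
by the nilpotent `u`, so `f - c` is nilpotent and `f` is a unit exactly when `c` is. Since `f - c`
lies in the algebra of global functions too, `f` is then already invertible there.
-/

section NilpotentPerturbation

variable {R A : Type*} [CommRing R] [CommRing A] [Algebra R A]

lemma isUnit_iff_of_isNilpotent_sub {f u : A} (h : IsNilpotent (f - u)) :
    IsUnit f ↔ IsUnit u := by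
  refine ⟨fun hf => ?_, fun hu => ?_⟩
  · simpa using h.neg.isUnit_add_left_of_commute hf (Commute.all _ _)
  · simpa using h.isUnit_add_left_of_commute hu (Commute.all _ _)

lemma mem_subalgebra_of_mul_eq_one_of_isNilpotent_sub {S : Subalgebra R A} {f g : A} {c : R}
    (hf : f ∈ S) (hc : IsUnit c) (hnil : IsNilpotent (f - algebraMap R A c))
    (hfg : f * g = 1) : g ∈ S := by
  have hnilS : IsNilpotent ((⟨f, hf⟩ : S) - algebraMap R S c) :=
    (IsNilpotent.map_iff (f := S.val) Subtype.val_injective).1 hnil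
  obtain ⟨⟨g', hg'⟩, hfg'⟩ :=
    ((isUnit_iff_of_isNilpotent_sub hnilS).2 (hc.map (algebraMap R S))).exists_left_inv
  have hg'g : g' = g := left_inv_eq_right_inv (congrArg Subtype.val hfg') hfg
  exact hg'g ▸ hg'

end NilpotentPerturbation

lemma coeffL_apply (l : ℤ) (p : Lz) : coeffL l p = p.coeff l := rfl

lemma coeffL_T (l m : ℤ) : coeffL l (LaurentPolynomial.T m) = if m = l then 1 else 0 :=
  LaurentPolynomial.T_apply l m

lemma eq_algebraMap_of_coeffL_eq_zero {p : Lz} (hp : ∀ l ≠ 0, coeffL l p = 0) :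
    p = algebraMap ℂ Lz (coeffL 0 p) := by
  ext l
  rw [← LaurentPolynomial.C_eq_algebraMap, LaurentPolynomial.C_apply, ← coeffL_apply]
  split_ifs with hl
  · rw [hl]
  · exact hp l hl

lemma monA_zero_zero (n : ℕ) : monA n 0 0 = 1 := by
  rw [monA, mon, LaurentPolynomial.T_zero, PowerSeries.monomial_zero_eq_C_apply, map_one, map_one]

lemma monA_mul_monA (n : ℕ) (l m : ℤ) (i j : ℕ) :
    monA n l i * monA n m j = monA n (l + m) (i + j) := by
  rw [monA, monA, monA, ← map_mul, mon, mon, mon, PowerSeries.monomial_mul_monomial,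
    LaurentPolynomial.T_add]

lemma monA_eq_zero_of_lt {n i : ℕ} (hi : n < i) (l : ℤ) : monA n l i = 0 := by
  rw [monA, toA, Ideal.Quotient.eq_zero_iff_mem, In, Ideal.mem_span_singleton,
    PowerSeries.X_pow_dvd_iff]
  intro m hm
  rw [mon, PowerSeries.coeff_monomial, if_neg (by lia)]

/-- The subalgebra of `A` spanned by the monomials `z^l u^i` with `i ≤ n` whose exponent `(l, i)`
lies in a given additive submonoid of `ℤ × ℕ`. -/
def monomialSubalgebra (n : ℕ) (S : AddSubmonoid (ℤ × ℕ)) : Subalgebra ℂ (Aq n) :=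
  (Submodule.span ℂ {x | ∃ l : ℤ, ∃ i : ℕ, (l, i) ∈ S ∧ i ≤ n ∧ x = monA n l i}).toSubalgebra
    (Submodule.subset_span ⟨0, 0, S.zero_mem, n.zero_le, (monA_zero_zero n).symm⟩) <| by
      intro f g hf hg
      refine Submodule.mul_le.1 ?_ f hf g hg
      rw [Submodule.span_mul_span, Submodule.span_le]
      rintro _ ⟨_, ⟨l, i, hli, -, rfl⟩, _, ⟨m, j, hmj, -, rfl⟩, rfl⟩
      simp only [monA_mul_monA, SetLike.mem_coe]
      rcases le_or_gt (i + j) n with hij | hij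
      · exact Submodule.subset_span ⟨l + m, i + j, S.add_mem hli hmj, hij, rfl⟩
      · rw [monA_eq_zero_of_lt hij]
        exact Submodule.zero_mem _

/-- The exponents `(l, i)` of the monomials `z^l u^i` regular on the chart `U`. -/
def coneU : AddSubmonoid (ℤ × ℕ) where
  carrier := {e | 0 ≤ e.1}
  zero_mem' := by simp
  add_mem' he he' := by simpa using add_nonneg he he'

/-- The exponents `(l, i)` of the monomials `z^l u^i` regular on the chart `V`. -/
def coneV (k : ℕ) : AddSubmonoid (ℤ × ℕ) where
  carrier := {e | e.1 ≤ k * e.2}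
  zero_mem' := by simp
  add_mem' he he' := by simpa [mul_add] using add_le_add he he'

lemma mem_coneU {l : ℤ} {i : ℕ} : (l, i) ∈ coneU ↔ 0 ≤ l := Iff.rfl

lemma mem_coneV {k : ℕ} {l : ℤ} {i : ℕ} : (l, i) ∈ coneV k ↔ l ≤ k * i := Iff.rfl

/-- The algebra `O_U ∩ O_V` of global functions on `Z_k^{(n)}`. -/
def globalFunctions (k n : ℕ) : Subalgebra ℂ (Aq n) :=
  monomialSubalgebra n coneU ⊓ monomialSubalgebra n (coneV k)

lemma mem_globalFunctions {k n : ℕ} {f : Aq n} :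
    f ∈ globalFunctions k n ↔ f ∈ OU n ⊓ OV k n := Iff.rfl

/-- Restriction of functions to the zero section `u = 0`. -/
def restrictZeroSection (n : ℕ) : Aq n →ₐ[ℂ] Lz :=
  Ideal.Quotient.liftₐ (In n)
    { PowerSeries.constantCoeff (R := Lz) with commutes' := fun _ => rfl } <| by
      intro p hp
      rw [In, Ideal.mem_span_singleton] at hp
      exact PowerSeries.X_dvd_iff.1 ((dvd_pow_self _ n.succ_ne_zero).trans hp)

lemma restrictZeroSection_toA (n : ℕ) (p : Pz) :
    restrictZeroSection n (toA n p) = PowerSeries.constantCoeff p := rfl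

lemma restrictZeroSection_monA (n : ℕ) (l : ℤ) (i : ℕ) :
    restrictZeroSection n (monA n l i) = if i = 0 then LaurentPolynomial.T l else 0 := by
  rw [monA, restrictZeroSection_toA, mon, ← PowerSeries.coeff_zero_eq_constantCoeff_apply,
    PowerSeries.coeff_monomial]
  simp only [eq_comm]

lemma c00_eq_coeffL_restrictZeroSection {n : ℕ} (f : Aq n) :
    c00 n f = coeffL 0 (restrictZeroSection n f) := by
  obtain ⟨p, rfl⟩ := Ideal.Quotient.mk_surjective f
  change coeffL 0 (PowerSeries.coeff 0 p) = coeffL 0 (PowerSeries.constantCoeff p)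
  rw [PowerSeries.coeff_zero_eq_constantCoeff_apply]

lemma isNilpotent_of_restrictZeroSection_eq_zero {n : ℕ} {f : Aq n}
    (hf : restrictZeroSection n f = 0) : IsNilpotent f := by
  obtain ⟨p, rfl⟩ := Ideal.Quotient.mk_surjective f
  refine ⟨n + 1, ?_⟩
  rw [← map_pow, Ideal.Quotient.eq_zero_iff_mem, In, Ideal.mem_span_singleton]
  exact pow_dvd_pow_of_dvd (PowerSeries.X_dvd_iff.2 hf) _

lemma coeffL_restrictZeroSection_eq_zero {n : ℕ} {S : AddSubmonoid (ℤ × ℕ)} {f : Aq n}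
    (hf : f ∈ monomialSubalgebra n S) {l : ℤ} (hl : (l, 0) ∉ S) :
    coeffL l (restrictZeroSection n f) = 0 := by
  suffices h : (monomialSubalgebra n S).toSubmodule ≤
      LinearMap.ker (coeffL l ∘ₗ (restrictZeroSection n).toLinearMap) from h hf
  refine Submodule.span_le.2 ?_
  rintro _ ⟨m, i, hmi, -, rfl⟩
  change coeffL l (restrictZeroSection n (monA n m i)) = 0
  rw [restrictZeroSection_monA]
  split_ifs with hi
  · have hml : m ≠ l := by
      rintro rfl
      exact hl (hi ▸ hmi)
    rw [coeffL_T, if_neg hml]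
  · exact map_zero _

lemma restrictZeroSection_eq_algebraMap_c00 {k n : ℕ} {f : Aq n}
    (hf : f ∈ globalFunctions k n) :
    restrictZeroSection n f = algebraMap ℂ Lz (c00 n f) := by
  rw [c00_eq_coeffL_restrictZeroSection]
  refine eq_algebraMap_of_coeffL_eq_zero fun l hl => ?_
  rcases hl.lt_or_gt with hneg | hpos
  · exact coeffL_restrictZeroSection_eq_zero hf.1 (by simpa [mem_coneU] using hneg)
  · exact coeffL_restrictZeroSection_eq_zero hf.2 (by simpa [mem_coneV] using hpos)

lemma isNilpotent_sub_algebraMap_c00 {k n : ℕ} {f : Aq n} (hf : f ∈ globalFunctions k n) :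
    IsNilpotent (f - algebraMap ℂ (Aq n) (c00 n f)) := by
  apply isNilpotent_of_restrictZeroSection_eq_zero
  rw [map_sub, AlgHom.commutes, restrictZeroSection_eq_algebraMap_c00 hf, sub_self]

instance (n : ℕ) : Nontrivial (Aq n) := (restrictZeroSection n).toRingHom.domain_nontrivial

/-- a global function `f ∈ O_U ∩ O_V` is a unit of `A` if and only if its
coefficient of `z^0 u^0` is nonzero, and in that case its inverse again lies in `O_U ∩ O_V`. -/
theorem statement6 (k n : ℕ) (hk : 1 ≤ k) (hn : 1 ≤ n) (f : Aq n)
    (hf : f ∈ OU n ⊓ OV k n) :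
    (IsUnit f ↔ c00 n f ≠ 0) ∧
    (∀ g : Aq n, f * g = 1 → g ∈ OU n ⊓ OV k n) := by
  rw [← mem_globalFunctions] at hf
  have hnil := isNilpotent_sub_algebraMap_c00 hf
  have hunit : IsUnit f ↔ c00 n f ≠ 0 := by
    rw [isUnit_iff_of_isNilpotent_sub hnil, isUnit_map_iff, isUnit_iff_ne_zero]
  refine ⟨hunit, fun g hfg => ?_⟩
  have hc : c00 n f ≠ 0 := hunit.1 (IsUnit.of_mul_eq_one g hfg)
  exact mem_globalFunctions.1
    (mem_subalgebra_of_mul_eq_one_of_isNilpotent_sub hf hc.isUnit hnil hfg)
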